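/- Let A₁,…,A_r, F₁,…,F_s be groups where each Aᵢ is polycyclic and each Fⱼ is finite. Then the free product A₁ * ⋯ * A_r * F₁ * ⋯ * F_s admits a golden system. -/

import Mathlib

/-!
Left multiplication alone suffices. Colour the group by `δ : G → D` with `D` finite so that `1` is
alone in its colour, and say that a step `x ↦ s * x` (with `s` a generator) is *determined* when the
colour of `z` being that of `x` forces the colour of `s * z` to be that of `s * x`. A determined
step is visible in the configuration set, hence holds in every configuration pair with the same
configuration set. So if every `x` is reached from `1` by determined steps, the words
recording these paths form a golden system (`HasDeterminedColoring.hasGoldenSystem`).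

Such colourings exist in two situations.

* If `K ≤ G` has one and `T` is a left transversal of `K` containing `1` which itself can be reached
  from `1` by determined steps inside `T`, then colour `t * k` by the pair of colours
  (`HasDeterminedColoring.of_isComplement`): first build `k`, then `t` on its left. A finite
  transversal is coloured injectively; a transversal `{t ^ n}` with `t` of infinite order is
  coloured by the sign of `n`. This yields finite groups and, by induction on the series,
  polycyclic groups.
* In a free product, colour a reduced word by the factor and colour of its first syllable
  (`HasDeterminedColoring.coprodI`): syllables are added on the left one at a time, and multiplying
  by a letter of one factor changes only the first syllable.
-/

open scoped Pointwise

universe u v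

/-- `g` is an (ordered, finite) generating tuple of the group `G`. -/
def IsGenerating {G : Type*} [Group G] {n : ℕ} (g : Fin n → G) : Prop :=
  Subgroup.closure (Set.range g) = ⊤

/-- `E` is an (ordered, finite) partition of the underlying set of `G`:
every element lies in exactly one cell. -/
def IsPartition {G : Type*} {m : ℕ} (E : Fin m → Set G) : Prop :=
  ∀ x : G, ∃! i : Fin m, x ∈ E i

/-- The type in which two-sided configurations corresponding to a generating tuple of
length `n` and a partition of length `m` live: a tuple `(c₀, (c₁,…,cₙ), (c_{n+1},…,c_{2n}))`. -/
abbrev TwoSidedConfig (n m : ℕ) := Fin m × (Fin n → Fin m) × (Fin n → Fin m)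

/-- The two-sided configuration set `Con_t(𝔤, ℰ)`. -/
def TwoSidedConfigSet {G : Type*} [Group G] {n m : ℕ} (g : Fin n → G) (E : Fin m → Set G) :
    Set (TwoSidedConfig n m) :=
  {c | ∃ x ∈ E c.1, ∀ i : Fin n, g i * x ∈ E (c.2.1 i) ∧ x * g i ∈ E (c.2.2 i)}

/-- `Con_t(G)`: the collection of all two-sided configuration sets of `G`,
over all configuration pairs `(𝔤, ℰ)`. -/
def TwoSidedConfigSets (G : Type*) [Group G] : Set (Σ n m : ℕ, Set (TwoSidedConfig n m)) :=
  {S | ∃ g : Fin S.1 → G, ∃ E : Fin S.2.1 → Set G,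
    IsGenerating g ∧ IsPartition E ∧ S.2.2 = TwoSidedConfigSet g E}

/-- Two-sided configuration equivalence `G ≈ₜ H`. -/
def ConfigEqT (G : Type*) (H : Type*) [Group G] [Group H] : Prop :=
  TwoSidedConfigSets G = TwoSidedConfigSets H

/-- The (one-sided) configuration set `Con(𝔤, ℰ)`. -/
def ConfigSet {G : Type*} [Group G] {n m : ℕ} (g : Fin n → G) (E : Fin m → Set G) :
    Set (Fin m × (Fin n → Fin m)) :=
  {c | ∃ x ∈ E c.1, ∀ k : Fin n, g k * x ∈ E (c.2 k)}

/-- `Con(G)`: the collection of all configuration sets of `G`. -/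
def ConfigSets (G : Type*) [Group G] : Set (Σ n m : ℕ, Set (Fin m × (Fin n → Fin m))) :=
  {S | ∃ g : Fin S.1 → G, ∃ E : Fin S.2.1 → Set G,
    IsGenerating g ∧ IsPartition E ∧ S.2.2 = ConfigSet g E}

/-- Configuration equivalence `G ≈ H`. -/
def ConfigEq (G : Type*) (H : Type*) [Group G] [Group H] : Prop :=
  ConfigSets G = ConfigSets H

/-- The word `W(J, ρ; 𝔤) = ∏_{i=1}^{p} g_{J(i)}^{ρ(i)}` associated to a representative
pair `(J, ρ)` (here `ρ i = true` encodes exponent `1`, and `ρ i = false` exponent `-1`). -/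
def word {G : Type*} [Group G] {n p : ℕ} (g : Fin n → G) (J : Fin p → Fin n)
    (ρ : Fin p → Bool) : G :=
  ((List.finRange p).map (fun i => if ρ i then g (J i) else (g (J i))⁻¹)).prod

/-- The configuration pair `(𝔤, q⁻¹(ℰ))` is golden w.r.t. the normal subgroup `N`,
where `ℰ` is a partition of `G ⧸ N` containing the singleton `{1}`. -/
def IsGoldenConfigPair {G : Type u} [Group G] (N : Subgroup G) [N.Normal] {n m : ℕ}
    (g : Fin n → G) (E : Fin m → Set (G ⧸ N)) : Prop :=
  IsGenerating g ∧ IsPartition E ∧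
  ∃ i₀ : Fin m, E i₀ = ({1} : Set (G ⧸ N)) ∧
  ∃ (p : G → ℕ) (J : ∀ x : G, Fin (p x) → Fin n) (ρ : ∀ x : G, Fin (p x) → Bool),
    (∀ x : G, x ∉ N →
      QuotientGroup.mk' N x = word (fun i => QuotientGroup.mk' N (g i)) (J x) (ρ x)) ∧
    (∀ (H : Type v) [Group H] (h : Fin n → H) (F : Fin m → Set H),
      IsGenerating h → IsPartition F →
      TwoSidedConfigSet g (fun i => QuotientGroup.mk' N ⁻¹' E i) = TwoSidedConfigSet h F →
      ∀ x : G, x ∉ N → word h (J x) (ρ x) • F i₀ ∩ F i₀ = ∅)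

/-- `G` has a golden configuration pair w.r.t. the normal subgroup `N`. -/
def HasGoldenConfigPairWrt (G : Type u) [Group G] (N : Subgroup G) [N.Normal] : Prop :=
  ∃ (n m : ℕ) (g : Fin n → G) (E : Fin m → Set (G ⧸ N)), IsGoldenConfigPair.{u, v} N g E

/-- `G` has a golden configuration pair (i.e. one w.r.t. the trivial subgroup). -/
def HasGoldenConfigPair (G : Type u) [Group G] : Prop :=
  HasGoldenConfigPairWrt.{u, v} G ⊥

/-- `(𝔤, ς, {(J_g, ρ_g)})` is a golden system w.r.t. the normal subgroup `N`.  The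
finite-range function `ς` on `G ⧸ N` is encoded as a surjection onto `Fin m`; the
`ς`-partition of `G` is then `v ↦ (ς ∘ q)⁻¹(v)`, `v : Fin m`. -/
def IsGoldenSystem {G : Type u} [Group G] (N : Subgroup G) [N.Normal] {n m : ℕ}
    (g : Fin n → G) (ς : G ⧸ N → Fin m)
    {p : G → ℕ} (J : ∀ x : G, Fin (p x) → Fin n) (ρ : ∀ x : G, Fin (p x) → Bool) : Prop :=
  IsGenerating g ∧ Function.Surjective ς ∧
  (∀ x : G, x ∉ N →
    QuotientGroup.mk' N x = word (fun i => QuotientGroup.mk' N (g i)) (J x) (ρ x)) ∧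
  ((fun x : G => ς (QuotientGroup.mk' N x)) ⁻¹' {ς (1 : G ⧸ N)} = (N : Set G)) ∧
  (∀ (H : Type v) [Group H] (h : Fin n → H) (F : Fin m → Set H),
    IsGenerating h → IsPartition F →
    TwoSidedConfigSet g (fun v => (fun x : G => ς (QuotientGroup.mk' N x)) ⁻¹' {v})
      = TwoSidedConfigSet h F →
    ∀ x : G, x ∉ N →
      word h (J x) (ρ x) • F (ς (1 : G ⧸ N)) ⊆ F (ς (QuotientGroup.mk' N x)))

/-- `G` admits a golden system w.r.t. the normal subgroup `N`. -/
def HasGoldenSystemWrt (G : Type u) [Group G] (N : Subgroup G) [N.Normal] : Prop :=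
  ∃ (n m : ℕ) (g : Fin n → G) (ς : G ⧸ N → Fin m) (p : G → ℕ)
    (J : ∀ x : G, Fin (p x) → Fin n) (ρ : ∀ x : G, Fin (p x) → Bool),
    IsGoldenSystem.{u, v} N g ς J ρ

/-- `G` admits a golden system (i.e. one w.r.t. the trivial subgroup). -/
def HasGoldenSystem (G : Type u) [Group G] : Prop :=
  HasGoldenSystemWrt.{u, v} G ⊥

/-- A group is Hopfian if every surjective endomorphism is an automorphism. -/
def IsHopfianGroup (G : Type*) [Group G] : Prop :=
  ∀ f : G →* G, Function.Surjective f → Function.Bijective f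

/-- A group is finitely presented if it is presented by finitely many generators
and finitely many relators. -/
def IsFinitelyPresentedGroup (G : Type*) [Group G] : Prop :=
  ∃ (n : ℕ) (rels : Set (FreeGroup (Fin n))),
    rels.Finite ∧ Nonempty (PresentedGroup rels ≃* G)

/-- A group is polycyclic if it has a subnormal series with cyclic factors. -/
def IsPolycyclic (G : Type*) [Group G] : Prop :=
  ∃ (k : ℕ) (c : Fin (k + 1) → Subgroup G),
    c 0 = ⊥ ∧ c (Fin.last k) = ⊤ ∧
    ∀ i : Fin k, c i.castSucc ≤ c i.succ ∧
      ∃ hn : ((c i.castSucc).subgroupOf (c i.succ)).Normal,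
        letI := hn
        IsCyclic ((c i.succ) ⧸ (c i.castSucc).subgroupOf (c i.succ))

/-- An FC-group: every conjugacy class is finite. -/
def IsFCGroup (G : Type*) [Group G] : Prop :=
  ∀ g : G, {h : G | IsConj g h}.Finite

/-- A normal subset: `hM = Mh` for all `h`. -/
def IsNormalSubset {H : Type*} [Group H] (M : Set H) : Prop :=
  ∀ h : H, (fun x => h * x) '' M = (fun x => x * h) '' M

/-- `E'` is a refinement of the partition `E`. -/
def IsRefinement {G : Type*} {r s : ℕ} (E' : Fin s → Set G) (E : Fin r → Set G) : Prop :=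
  ∀ l : Fin s, ∃ k : Fin r, E' l ⊆ E k

/-- The pairs `(ℰ', ℰ)` and `(ℱ', ℱ)` are similar. -/
def SimilarPairs {G H : Type*} {r s : ℕ} (E : Fin r → Set G) (E' : Fin s → Set G)
    (F : Fin r → Set H) (F' : Fin s → Set H) : Prop :=
  ∀ k : Fin r, {l : Fin s | (E k ∩ E' l).Nonempty} = {l : Fin s | (F k ∩ F' l).Nonempty}

/-! ### Determined steps and golden systems -/

/-- Elements of `G` reached from `1` by left multiplications by elements of `S`, such that at each
step `x ↦ s * x` the colour `δ x`, among points of `T`, determines the colour `δ (s * x)` and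
ensures that the next point lies in `T`. The case `T = univ` concerns the whole group; other `T`
are used for transversals. -/
inductive DetReach {G : Type*} [Group G] {D : Type*} (S T : Set G) (δ : G → D) : G → Prop
  | one : DetReach S T δ 1
  | step (x s : G) (hx : DetReach S T δ x) (hs : s ∈ S)
      (hdet : ∀ z ∈ T, δ z = δ x → s * z ∈ T ∧ δ (s * z) = δ (s * x)) : DetReach S T δ (s * x)

/-- `G` has a colouring with finitely many colours, in which `1` is alone in its colour, such that
every element is reached from `1` by determined left multiplications by elements of a finite set. -/
def HasDeterminedColoring (G : Type*) [Group G] : Prop :=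
  ∃ (D : Type) (_ : Finite D) (S : Set G) (δ : G → D), S.Finite ∧ (∀ x, δ x = δ 1 → x = 1) ∧
    ∀ x, DetReach S Set.univ δ x

theorem DetReach.mem_closure {G : Type*} [Group G] {D : Type*} {S T : Set G} {δ : G → D} {x : G}
    (h : DetReach S T δ x) : x ∈ Subgroup.closure S := by
  induction h with
  | one => exact one_mem _
  | step x s _ hs _ ih => exact mul_mem (Subgroup.subset_closure hs) ih

/-- A determined path from `1` to `x` gives a positive word for `x` which acts in the same way on
colours in every group with the same two-sided configuration set. -/
theorem DetReach.exists_word {G : Type u} [Group G] {n m : ℕ} {g : Fin n → G} {c : G → Fin m}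
    {x : G} (h : DetReach (Set.range g) Set.univ c x) :
    ∃ L : List (Fin n), (L.map g).prod = x ∧
      ∀ (H : Type v) [Group H] (h : Fin n → H) (F : Fin m → Set H), IsPartition F →
        TwoSidedConfigSet g (fun v => c ⁻¹' {v}) = TwoSidedConfigSet h F →
        ∀ y ∈ F (c 1), (L.map h).prod * y ∈ F (c x) := by
  induction h with
  | one => exact ⟨[], by simp, fun H _ h F _ _ y hy => by simpa using hy⟩
  | step x s hx hs hdet ih =>
    obtain ⟨L, hL, hF⟩ := ih
    obtain ⟨i, rfl⟩ := hs
    refine ⟨i :: L, by simp [hL], fun H _ h F hP hcon y hy => ?_⟩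
    have hy' := hF H h F hP hcon y hy
    set y' := (L.map h).prod * y with hy'def
    choose cell hcell _ using hP
    have hmem : ((c x, (fun k => cell (h k * y')), fun k => cell (y' * h k)) :
        TwoSidedConfig n m) ∈ TwoSidedConfigSet h F :=
      ⟨y', hy', fun k => ⟨hcell _, hcell _⟩⟩
    rw [← hcon] at hmem
    obtain ⟨z, hz, hk⟩ := hmem
    have h1 : c z = c x := hz
    have h2 : c (g i * z) = cell (h i * y') := (hk i).1
    have h3 := (hdet z trivial h1).2
    rw [List.map_cons, List.prod_cons, mul_assoc, ← h3, h2]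
    exact hcell _

theorem word_eq_prod {G : Type*} [Group G] {n : ℕ} (g : Fin n → G) (L : List (Fin n)) :
    word g L.get (fun _ => true) = (L.map g).prod := by
  unfold word
  congr 1
  conv_rhs => rw [← List.map_get_finRange L, List.map_map]
  simp only [if_true]
  rfl

theorem DetReach.congr {G : Type*} [Group G] {D D' : Type*} {S T : Set G} {δ : G → D}
    {δ' : G → D'} (hδ : ∀ x y, δ x = δ y ↔ δ' x = δ' y) {x : G} (h : DetReach S T δ x) :
    DetReach S T δ' x := by
  induction h with
  | one => exact .one
  | step x s _ hs hdet ih => exact .step x s ih hs (by simpa only [hδ] using hdet)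

theorem HasDeterminedColoring.hasGoldenSystem {G : Type u} [Group G]
    (hG : HasDeterminedColoring G) : HasGoldenSystem.{u, v} G := by
  obtain ⟨D, _, S, δ, hS, h1, hr⟩ := hG
  obtain ⟨n, g, rfl⟩ := hS.fin_embedding
  obtain ⟨m, ⟨e⟩⟩ := Finite.exists_equiv_fin (Set.range δ)
  let c : G → Fin m := fun x => e ⟨δ x, x, rfl⟩
  have hc : ∀ x y, δ x = δ y ↔ c x = c y := fun x y => by
    simp only [c, EmbeddingLike.apply_eq_iff_eq]
    exact Subtype.mk.injEq _ _ _ _ ▸ Iff.rfl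
  have hcs : Function.Surjective c := by
    intro v
    obtain ⟨x, hx⟩ := (e.symm v).2
    exact ⟨x, by simp [c, hx]⟩
  choose L hL hF using fun x => ((hr x).congr hc).exists_word.{u, v}
  let q : G ⧸ (⊥ : Subgroup G) ≃* G := QuotientGroup.quotientBot
  have hq : ∀ x : G, q (QuotientGroup.mk' ⊥ x) = x := fun x => rfl
  refine ⟨n, m, g, c ∘ q, fun x => (L x).length, fun x => (L x).get, fun _ _ => true, ?_,
    hcs.comp q.surjective, ?_, ?_, ?_⟩
  · exact eq_top_iff.2 fun x _ => (hr x).mem_closure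
  · intro x _
    rw [word_eq_prod]
    conv_lhs => rw [← hL x]
    rw [map_list_prod, List.map_map]
    rfl
  · ext x
    simp only [Set.mem_preimage, Function.comp_apply, hq, map_one, Set.mem_singleton_iff,
      SetLike.mem_coe, Subgroup.mem_bot, ← hc]
    exact ⟨h1 x, fun h => by rw [h]⟩
  · intro H _ h F _ hP hcon x _
    simp only [Function.comp_apply, hq, map_one] at hcon ⊢
    rw [word_eq_prod]
    rintro _ ⟨y, hy, rfl⟩
    exact hF x H h F hP hcon y hy

/-! ### Extensions by transversals, finite groups and polycyclic groups -/

theorem HasDeterminedColoring.of_mulEquiv {G H : Type*} [Group G] [Group H] (e : G ≃* H)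
    (hG : HasDeterminedColoring G) : HasDeterminedColoring H := by
  obtain ⟨D, hD, S, δ, hS, h1, hr⟩ := hG
  refine ⟨D, hD, e '' S, δ ∘ e.symm, hS.image _, fun x hx => ?_, fun x => ?_⟩
  · exact e.symm.map_eq_one_iff.1 (h1 _ (by simpa using hx))
  · obtain ⟨x, rfl⟩ := e.surjective x
    induction hr x with
    | one => rw [map_one]; exact .one
    | step x s _ hs hdet ih =>
      rw [map_mul]
      refine .step _ _ ih ⟨s, hs, rfl⟩ fun z _ hz => ⟨trivial, ?_⟩
      simpa using (hdet (e.symm z) trivial (by simpa using hz)).2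

/-- If a subgroup `K` and a left transversal `T ∋ 1` of `K` have determined colourings, then so has
the whole group, with `t * k` coloured by the colours of `t` and `k`. -/
theorem HasDeterminedColoring.of_isComplement {G : Type*} [Group G] {K : Subgroup G}
    (hK : HasDeterminedColoring K) {T : Set G} (hT : Subgroup.IsComplement T K) (hT1 : 1 ∈ T)
    {E : Type} [Finite E] {R : Set G} (hR : R.Finite) {ε : G → E}
    (hε : ∀ t ∈ T, ε t = ε 1 → t = 1) (hr : ∀ t ∈ T, DetReach R T ε t) :
    HasDeterminedColoring G := by
  obtain ⟨D, hD, S, δ, hS, h1, hrK⟩ := hK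
  let c : G → E × D := fun z => (ε (hT.equiv z).1, δ (hT.equiv z).2)
  have hequiv : ∀ t (_ : t ∈ T) (k : K), hT.equiv (t * k) = (⟨t, ‹_›⟩, k) := fun t ht k => by
    rw [← Equiv.eq_symm_apply]; rfl
  have hc : ∀ t (_ : t ∈ T) (k : K), c (t * k) = (ε t, δ k) := fun t ht k => by
    simp only [c, hequiv t ht k]
  have hdec : ∀ z : G, ∃ t ∈ T, ∃ k : K, z = t * k := fun z =>
    ⟨_, (hT.equiv z).1.2, (hT.equiv z).2, (hT.equiv_fst_mul_equiv_snd z).symm⟩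
  refine ⟨E × D, inferInstance, R ∪ K.subtype '' S, c, hR.union (hS.image _), fun x hx => ?_, ?_⟩
  · obtain ⟨t, ht, k, rfl⟩ := hdec x
    have h11 := hc 1 hT1 1
    rw [Subgroup.coe_one, mul_one] at h11
    rw [hc t ht, h11, Prod.mk.injEq] at hx
    simp [hε t ht hx.1, h1 k hx.2]
  · have hK : ∀ k : K, DetReach (R ∪ K.subtype '' S) Set.univ c k := by
      intro k
      induction hrK k with
      | one => exact .one
      | step k s _ hs hdet ih =>
        rw [Subgroup.coe_mul]
        refine .step _ _ ih (Or.inr ⟨s, hs, rfl⟩) fun z _ hz => ⟨trivial, ?_⟩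
        obtain ⟨t, ht, l, rfl⟩ := hdec z
        have hk := hc 1 hT1 k
        have hsk := hc 1 hT1 (s * k)
        have hsl := hc 1 hT1 (s * l)
        rw [one_mul] at hk hsk hsl
        rw [hc t ht, hk, Prod.mk.injEq] at hz
        -- the first colour of `t * l` is that of `1`, hence `t = 1` and `t * l ∈ K`
        rw [hε t ht hz.1, one_mul, ← Subgroup.coe_mul, ← Subgroup.coe_mul, hsk, hsl,
          (hdet l trivial hz.2).2]
    intro x
    obtain ⟨t, ht, k, rfl⟩ := hdec x
    suffices h : ∀ t, DetReach R T ε t →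
        t ∈ T ∧ DetReach (R ∪ K.subtype '' S) Set.univ c (t * k) from (h t (hr t ht)).2
    intro t h
    induction h with
    | one => exact ⟨hT1, by rw [one_mul]; exact hK k⟩
    | step t s _ hs hdet ih =>
      have hst := (hdet t ih.1 rfl).1
      refine ⟨hst, ?_⟩
      rw [mul_assoc]
      refine .step _ _ ih.2 (Or.inl hs) fun z _ hz => ⟨trivial, ?_⟩
      obtain ⟨t', ht', l, rfl⟩ := hdec z
      rw [hc t' ht', hc t ih.1, Prod.mk.injEq] at hz
      obtain ⟨h2, h3⟩ := hdet t' ht' hz.1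
      rw [← mul_assoc, ← mul_assoc, hc _ h2, hc _ hst, h3, hz.2]

theorem HasDeterminedColoring.of_finite_quotient {G : Type*} [Group G] {K : Subgroup G}
    (hK : HasDeterminedColoring K) [Finite (G ⧸ K)] : HasDeterminedColoring G := by
  obtain ⟨T, hT, h1⟩ := K.exists_isComplement_left 1
  have : Finite T := Finite.of_equiv _ hT.leftQuotientEquiv
  classical
  obtain ⟨n, ⟨e⟩⟩ := Finite.exists_equiv_fin T
  let ε : G → Option (Fin n) := fun x => if h : x ∈ T then some (e ⟨x, h⟩) else none
  have hε : ∀ t ∈ T, ∀ t' ∈ T, ε t = ε t' → t = t' := fun t ht t' ht' h => by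
    simpa [ε, ht, ht'] using h
  refine hK.of_isComplement hT h1 (R := T) T.toFinite (ε := ε) (fun t ht h => hε t ht 1 h1 h)
    fun t ht => ?_
  have := DetReach.step (T := T) (δ := ε) 1 t .one ht fun z hz h => by
    rw [hε z hz 1 h1 h, mul_one]; exact ⟨ht, rfl⟩
  rwa [mul_one] at this

theorem HasDeterminedColoring.of_subsingleton {G : Type*} [Group G] [Subsingleton G] :
    HasDeterminedColoring G :=
  ⟨Unit, inferInstance, ∅, fun _ => (), Set.finite_empty, fun _ _ => Subsingleton.elim _ _,
    fun x => by rw [Subsingleton.elim x 1]; exact .one⟩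

theorem HasDeterminedColoring.of_finite {G : Type*} [Group G] [Finite G] :
    HasDeterminedColoring G :=
  (HasDeterminedColoring.of_subsingleton (G := (⊥ : Subgroup G))).of_finite_quotient

/-- The powers of an element of infinite order are reached by determined steps when `t ^ n` is
coloured by the sign of `n`. -/
theorem DetReach.zpow {G : Type*} [Group G] {t : G} {ε : G → SignType}
    (hε : ∀ n : ℤ, ε (t ^ n) = SignType.sign n) (n : ℤ) :
    DetReach {t, t⁻¹} (Subgroup.zpowers t : Set G) ε (t ^ n) := by
  have hpos : ∀ n : ℕ, DetReach {t, t⁻¹} (Subgroup.zpowers t : Set G) ε (t ^ (n : ℤ)) := by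
    intro n
    induction n with
    | zero => simpa using DetReach.one
    | succ n ih =>
      rw [Nat.cast_succ, add_comm, zpow_one_add]
      refine .step _ _ ih (Or.inl rfl) ?_
      rintro _ ⟨j, rfl⟩ hj
      simp only [hε] at hj
      have hj0 : 0 ≤ j := by
        rw [← sign_nonneg_iff, hj, sign_nonneg_iff]; omega
      refine ⟨⟨1 + j, by simp [zpow_add]⟩, ?_⟩
      rw [← zpow_one_add, ← zpow_one_add, hε, hε, sign_pos (by omega), sign_pos (by omega)]
  have hneg : ∀ n : ℕ, DetReach {t, t⁻¹} (Subgroup.zpowers t : Set G) ε (t ^ (-n : ℤ)) := by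
    intro n
    induction n with
    | zero => simpa using DetReach.one
    | succ n ih =>
      have hmul : ∀ j : ℤ, t⁻¹ * t ^ j = t ^ (-1 + j) := fun j => by
        rw [zpow_add, zpow_neg_one]
      rw [Nat.cast_succ, neg_add, add_comm, ← hmul]
      refine .step _ _ ih (Or.inr rfl) ?_
      rintro _ ⟨j, rfl⟩ hj
      simp only [hε] at hj
      have hj0 : j ≤ 0 := by
        rw [← sign_nonpos_iff, hj, sign_nonpos_iff]; omega
      refine ⟨⟨-1 + j, (hmul j).symm⟩, ?_⟩
      simp only [hmul, hε]
      rw [sign_neg (by omega), sign_neg (by omega)]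
  rcases Int.eq_nat_or_neg n with ⟨k, rfl | rfl⟩
  · exact hpos k
  · exact hneg k

theorem HasDeterminedColoring.of_isCyclic_quotient {G : Type*} [Group G] {K : Subgroup G}
    [K.Normal] (hK : HasDeterminedColoring K) [IsCyclic (G ⧸ K)] : HasDeterminedColoring G := by
  cases finite_or_infinite (G ⧸ K) with
  | inl h => exact hK.of_finite_quotient
  | inr h =>
    obtain ⟨q, hq⟩ := IsCyclic.exists_generator (α := G ⧸ K)
    obtain ⟨t, rfl⟩ := QuotientGroup.mk_surjective q
    have hinj : Function.Injective fun n : ℤ => (t : G ⧸ K) ^ n := by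
      rw [injective_zpow_iff_not_isOfFinOrder]
      intro hfin
      have : Finite (Subgroup.zpowers (t : G ⧸ K)) := hfin.finite_zpowers
      rw [(Subgroup.eq_top_iff' _).2 hq] at this
      have : Finite (G ⧸ K) := Subgroup.topEquiv.toEquiv.finite_iff.1 this
      exact not_finite (G ⧸ K)
    have hinj' : Function.Injective fun n : ℤ => t ^ n := fun a b hab => hinj (by
      simpa using congrArg (QuotientGroup.mk (s := K)) hab)
    let ε : G → SignType := fun x => SignType.sign (Function.invFun (fun n : ℤ => t ^ n) x)
    have hε : ∀ n : ℤ, ε (t ^ n) = SignType.sign n := fun n =>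
      congrArg SignType.sign (Function.leftInverse_invFun hinj' n)
    have hT : Subgroup.IsComplement (Subgroup.zpowers t : Set G) K := by
      refine Subgroup.isComplement'_of_disjoint_and_mul_eq_univ ?_ ?_
      · rw [Subgroup.disjoint_def]
        rintro _ ⟨n, rfl⟩ hn
        have : (t : G ⧸ K) ^ n = (t : G ⧸ K) ^ (0 : ℤ) := by
          rw [zpow_zero, ← QuotientGroup.mk_zpow, QuotientGroup.eq_one_iff]; exact hn
        have : n = 0 := hinj this
        simp [this]
      · refine Set.eq_univ_of_forall fun x => ?_
        obtain ⟨n, hn⟩ := hq x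
        refine ⟨t ^ n, ⟨n, rfl⟩, (t ^ n)⁻¹ * x, ?_, by simp⟩
        exact QuotientGroup.eq.1 (by simpa using hn)
    refine hK.of_isComplement hT (one_mem _) (R := {t, t⁻¹}) (Set.toFinite _) (ε := ε) ?_ ?_
    · rintro _ ⟨n, rfl⟩ h
      have h0 := hε 0
      rw [zpow_zero] at h0
      simp only [hε, h0, sign_zero, sign_eq_zero_iff] at h
      simp [h]
    · rintro _ ⟨n, rfl⟩
      exact DetReach.zpow hε n

theorem IsPolycyclic.hasDeterminedColoring {G : Type*} [Group G] (hG : IsPolycyclic G) :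
    HasDeterminedColoring G := by
  obtain ⟨k, c, h0, hk, hstep⟩ := hG
  have h : ∀ i, HasDeterminedColoring (c i) := by
    intro i
    induction i using Fin.induction with
    | zero => rw [h0]; exact .of_subsingleton
    | succ i ih =>
      obtain ⟨hle, hn, hcyc⟩ := hstep i
      exact (ih.of_mulEquiv (Subgroup.subgroupOfEquivOfLe hle).symm).of_isCyclic_quotient
  have := h (Fin.last k)
  rw [hk] at this
  exact this.of_mulEquiv Subgroup.topEquiv

/-! ### Free products -/

open Monoid.CoprodI in
/-- At most one of the factors has a nontrivial first syllable in a given reduced word. -/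
theorem equivPair_head_eq_one {ι : Type*} {A : ι → Type*} [∀ i, Group (A i)] [DecidableEq ι]
    [∀ i, DecidableEq (A i)] {w : Word A} {i j : ι} (hij : j ≠ i)
    (hi : (Word.equivPair i w).head ≠ 1) : (Word.equivPair j w).head = 1 := by
  rw [Word.equivPair_head] at hi ⊢
  split_ifs at hi with h
  · exact dif_neg fun h' => hij (h'.2.symm.trans h.2)
  · exact absurd rfl hi

open Monoid.CoprodI in
/-- The colour of a reduced word is the family, over all factors, of the colours of its first
syllable in that factor; all entries but at most one are the colour of `1`. -/
theorem HasDeterminedColoring.coprodI {ι : Type} [Finite ι] {A : ι → Type*} [∀ i, Group (A i)]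
    (hA : ∀ i, HasDeterminedColoring (A i)) : HasDeterminedColoring (Monoid.CoprodI A) := by
  classical
  choose D hD S δ hS h1 hr using hA
  let cw : Word A → ∀ i, D i := fun w i => δ i (Word.equivPair i w).head
  let c : Monoid.CoprodI A → ∀ i, D i := fun x => cw (Word.equiv x)
  have hsmul : ∀ (i : ι) (s : A i) (x : Monoid.CoprodI A),
      Word.equiv (of s * x) = s • Word.equiv x := fun i s x => by
    change (of s * x) • (Word.empty : Word A) = s • (x • (Word.empty : Word A))
    rw [mul_smul, Word.smul_eq_of_smul]
  have hhead : ∀ (i : ι) (s : A i) (w : Word A),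
      (Word.equivPair i (s • w)).head = s * (Word.equivPair i w).head := fun i s w => by
    rw [Word.smul_eq_of_smul, Word.equivPair_smul_same]
  refine ⟨∀ i, D i, inferInstance, ⋃ i, of '' S i, c,
    Set.finite_iUnion fun i => (hS i).image _, fun x hx => ?_, fun x => ?_⟩
  · have hone : Word.equiv (1 : Monoid.CoprodI A) = Word.empty :=
      one_smul (Monoid.CoprodI A) (Word.empty : Word A)
    apply Word.equiv.injective
    rw [hone]
    have hx' : ∀ i, (Word.equivPair i (Word.equiv x)).head = 1 := fun i => h1 i _ (by
      have := congrFun hx i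
      simp only [c, cw, hone] at this
      rw [this, Word.equivPair_eq_of_fstIdx_ne (by simp [Word.fstIdx])])
    generalize Word.equiv x = w at hx'
    induction w using Word.consRecOn with
    | empty => rfl
    | cons i a w h2 h3 _ =>
      refine absurd ?_ h3
      rw [← hx' i, Word.cons_eq_smul, ← Word.smul_eq_of_smul, hhead,
        Word.equivPair_eq_of_fstIdx_ne h2, mul_one]
  · obtain ⟨w, rfl⟩ := Word.equiv.symm.surjective x
    change DetReach _ _ _ w.prod
    induction w using Word.consRecOn with
    | empty => rw [Word.prod_empty]; exact .one
    | cons i a w h2 h3 ih =>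
      rw [Word.prod_cons]
      have hw : Word.equiv w.prod = w := Word.equiv.apply_symm_apply w
      clear h3
      induction hr i a with
      | one => rwa [map_one, one_mul]
      | step a s _ hs hdet ih' =>
        -- if the first syllable is cancelled, what remains is `w`, already reached
        by_cases hsa : s * a = 1
        · rwa [hsa, map_one, one_mul]
        rw [map_mul, mul_assoc]
        refine .step _ _ ih' (Set.mem_iUnion.2 ⟨i, s, hs, rfl⟩) fun z _ hz => ⟨trivial, ?_⟩
        have haw : (Word.equivPair i (Word.equiv (of a * w.prod))).head = a := by
          rw [hsmul, hhead, hw, Word.equivPair_eq_of_fstIdx_ne h2, mul_one]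
        have hzi : δ i (Word.equivPair i (Word.equiv z)).head = δ i a := by
          rw [← congrArg (δ i) haw]; exact congrFun hz i
        have hsz := (hdet _ trivial hzi).2
        have hsz1 : s * (Word.equivPair i (Word.equiv z)).head ≠ 1 := fun h =>
          hsa (h1 i _ (by rw [← hsz, h]))
        funext j
        simp only [c, cw, hsmul i s]
        by_cases hj : j = i
        · subst hj
          rw [hhead, hhead, haw, hsz]
        · rw [equivPair_head_eq_one hj (by rwa [hhead]),
            equivPair_head_eq_one hj (by rwa [hhead, haw])]

/-- a free product of finitely many polycyclic and finite groups admits a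
golden system. -/
theorem hasGoldenSystem_coprodI_of_polycyclic_of_finite {r s : ℕ}
    (A : Fin r ⊕ Fin s → Type u) [∀ i, Group (A i)]
    (hpoly : ∀ i : Fin r, IsPolycyclic (A (Sum.inl i)))
    (hfin : ∀ j : Fin s, Finite (A (Sum.inr j))) :
    HasGoldenSystem.{u, v} (Monoid.CoprodI A) := by
  refine (HasDeterminedColoring.coprodI fun i => ?_).hasGoldenSystem
  cases i with
  | inl i => exact (hpoly i).hasDeterminedColoring
  | inr j =>
    have := hfin j
    exact .of_finite
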